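/- Let v, w ∈ ℝ^d with ‖v‖ < 1 and ‖w‖ < 1. Then (1 − ⟨v, w⟩) / √((1 − ‖v‖²)·(1 − ‖w‖²)) ≥ 1, with equality if and only if v = w. Hence the argument of arccosh in the Beltrami–Klein distance formula is always at least 1, and the distance between distinct points is strictly positive. -/

import Mathlib

open scoped RealInnerProductSpace

/-- Inverse hyperbolic cosine: `arcosh x = log (x + √(x² − 1))`. -/
noncomputable def arcosh (x : ℝ) : ℝ := Real.log (x + Real.sqrt (x ^ 2 - 1))

/-- For `v, w` in the open unit ball of `ℝ^d`,
`(1 − ⟨v,w⟩)/√((1 − ‖v‖²)(1 − ‖w‖²)) ≥ 1`, with equality iff `v = w`. Hence the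
argument of `arccosh` in the Beltrami–Klein distance formula is always at least 1,
and the distance between distinct points is strictly positive. -/
theorem klein_distance_arg_ge_one
    (d : ℕ) (v w : EuclideanSpace ℝ (Fin d)) (hv : ‖v‖ < 1) (hw : ‖w‖ < 1) :
    1 ≤ (1 - ⟪v, w⟫) / Real.sqrt ((1 - ‖v‖ ^ 2) * (1 - ‖w‖ ^ 2)) ∧
    ((1 - ⟪v, w⟫) / Real.sqrt ((1 - ‖v‖ ^ 2) * (1 - ‖w‖ ^ 2)) = 1 ↔ v = w) ∧
    (v ≠ w → 0 < arcosh ((1 - ⟪v, w⟫) / Real.sqrt ((1 - ‖v‖ ^ 2) * (1 - ‖w‖ ^ 2)))) := by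
  have ha : 0 < 1 - ‖v‖ ^ 2 := by nlinarith [norm_nonneg v]
  have hb : 0 < 1 - ‖w‖ ^ 2 := by nlinarith [norm_nonneg w]
  have hS : 0 < Real.sqrt ((1 - ‖v‖ ^ 2) * (1 - ‖w‖ ^ 2)) := Real.sqrt_pos.mpr (mul_pos ha hb)
  -- AM-GM for the square root
  have hamgm : Real.sqrt ((1 - ‖v‖ ^ 2) * (1 - ‖w‖ ^ 2))
      ≤ ((1 - ‖v‖ ^ 2) + (1 - ‖w‖ ^ 2)) / 2 := by
    apply Real.sqrt_le_iff.mpr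
    constructor
    · linarith
    · nlinarith [sq_nonneg ((1 - ‖v‖ ^ 2) - (1 - ‖w‖ ^ 2))]
  have hsub := norm_sub_sq_real v w
  have hlt : v ≠ w →
      1 < (1 - ⟪v, w⟫) / Real.sqrt ((1 - ‖v‖ ^ 2) * (1 - ‖w‖ ^ 2)) := by
    intro hne
    have hpos : 0 < ‖v - w‖ ^ 2 := pow_pos (norm_pos_iff.mpr (sub_ne_zero.mpr hne)) 2
    rw [one_lt_div hS]
    linarith
  have heq : v = w →
      (1 - ⟪v, w⟫) / Real.sqrt ((1 - ‖v‖ ^ 2) * (1 - ‖w‖ ^ 2)) = 1 := by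
    intro h
    subst h
    rw [real_inner_self_eq_norm_sq, Real.sqrt_mul_self ha.le, div_self ha.ne']
  refine ⟨?_, ⟨?_, heq⟩, ?_⟩
  · by_cases h : v = w
    · exact (heq h).ge
    · exact (hlt h).le
  · intro h
    by_contra hne
    exact (hlt hne).ne' h
  · intro hne
    exact Real.log_pos (lt_of_lt_of_le (hlt hne) (le_add_of_nonneg_right (Real.sqrt_nonneg _)))
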